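/- Let T: Lip(X,E) → Lip(Y,F) be a linear biseparating map. Then for every nonzero e ∈ E, inf{‖(Tê)(y)‖ : y ∈ Y} > 0, where ê denotes the constant function on X with value e. -/

import Mathlib

/-!
The idea is that `T⁻¹` is a weighted composition operator: every `y : Y` has a support point
`h y : X` such that `T⁻¹ g (h y)` depends only on `g y`.

Support points exist for any biseparating `T` with complete target. If `φ` is a real Lipschitz
function on `Y` and `a < b`, cutting `T ê` along `φ` writes `ê` as a sum `f₁ + f₂`, where `T f₁`
vanishes on `{φ ≤ a}` and `T f₂` on `{φ ≥ b}`. One of `f₁`, `f₂` is nonzero around a given `x`, so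
separation forces the images of functions concentrated near `x` to vanish on `{φ < a}`, or else on
`{φ > b}` (`IsBisep.dichotomy`). Pick `p n` in the cozero set of the image of a bump of radius
`1 / (n + 1)` at `x`. The sequence `p` has no uniformly separated subsequence, as the distance to
the even terms of such a subsequence would oscillate; by completeness it has a cluster point `y`,
and the dichotomy for the distance to `y` shows that the images concentrate near `y`
(`IsBisep.exists_support`). It follows that `T f y = 0` as soon as `x` is in the closure of the
interior of the zero set of `f`. If merely `f x = 0`, then `f` is a sum of two Lipschitz functions
of that kind, obtained from a cut-off oscillating in `log (dist · x)` (`exists_split`); hence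
`T f y = 0` (`IsBisep.exists_support_kernel`).

Apply this to `T⁻¹` and put `w = T ê`. As `T⁻¹ w = ê` has no zero, neither has `w`. If
`‖w (p n)‖ → 0`, then `p` has no cluster point, so it has a uniformly separated subsequence. Some
bounded Lipschitz `g` takes the values `w / ‖w‖` along it, and at the support points `T⁻¹ g` takes
the values `e / ‖w‖`, which are unbounded: a contradiction.
-/

open Metric Set Function Bornology
open scoped NNReal

/-- `f` is a bounded Lipschitz function. -/
def IsLip {X E : Type*} [PseudoMetricSpace X] [NormedAddCommGroup E] (f : X → E) : Prop :=
  (∃ K : ℝ≥0, LipschitzWith K f) ∧ ∃ C : ℝ, ∀ x, ‖f x‖ ≤ C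

/-- The cozero set of `f`. -/
def coz {X E : Type*} [Zero E] (f : X → E) : Set X := {x | f x ≠ 0}

/-- The norm `‖f‖_L = max {‖f‖_∞, L(f)}` on bounded Lipschitz functions. -/
noncomputable def lipNorm {X E : Type*} [PseudoMetricSpace X] [NormedAddCommGroup E]
    (f : X → E) : ℝ :=
  max (⨆ x, ‖f x‖) (⨆ p : X × X, ‖f p.1 - f p.2‖ / dist p.1 p.2)

/-- `T` is a linear biseparating map from `Lip(X,E)` onto `Lip(Y,F)`:
it maps bounded Lipschitz functions to bounded Lipschitz functions, is linear,
restricts to a bijection between the spaces of bounded Lipschitz functions, and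
both `T` and its inverse are separating (disjointness preserving). -/
structure IsBisep (𝕂 : Type*) {X Y E F : Type*} [RCLike 𝕂]
    [PseudoMetricSpace X] [PseudoMetricSpace Y]
    [NormedAddCommGroup E] [NormedSpace 𝕂 E] [NormedAddCommGroup F] [NormedSpace 𝕂 F]
    (T : (X → E) → (Y → F)) : Prop where
  maps_lip : ∀ f, IsLip f → IsLip (T f)
  map_add : ∀ f g, IsLip f → IsLip g → T (f + g) = T f + T g
  map_smul : ∀ (c : 𝕂) (f : X → E), IsLip f → T (c • f) = c • T f
  inj : ∀ f g, IsLip f → IsLip g → T f = T g → f = g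
  surj : ∀ g, IsLip g → ∃ f, IsLip f ∧ T f = g
  sep : ∀ f g, IsLip f → IsLip g → coz f ∩ coz g = ∅ → coz (T f) ∩ coz (T g) = ∅
  sep_inv : ∀ f g, IsLip f → IsLip g → coz (T f) ∩ coz (T g) = ∅ → coz f ∩ coz g = ∅

open Filter Topology

/-! ### Bounded Lipschitz functions and cut-offs -/

lemma IsLip.of_norm_le {X E : Type*} [PseudoMetricSpace X] [NormedAddCommGroup E] {f : X → E}
    (K C : ℝ) (hK : ∀ x y, ‖f x - f y‖ ≤ K * dist x y) (hC : ∀ x, ‖f x‖ ≤ C) : IsLip f := by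
  refine ⟨⟨K.toNNReal, LipschitzWith.of_dist_le_mul fun x y => ?_⟩, C, hC⟩
  rw [dist_eq_norm]
  exact (hK x y).trans (mul_le_mul_of_nonneg_right (Real.le_coe_toNNReal K) dist_nonneg)

lemma IsLip.bounds {X E : Type*} [PseudoMetricSpace X] [NormedAddCommGroup E] {f : X → E}
    (hf : IsLip f) :
    ∃ K C : ℝ, 0 ≤ K ∧ 0 ≤ C ∧ (∀ x y, ‖f x - f y‖ ≤ K * dist x y) ∧ ∀ x, ‖f x‖ ≤ C := by
  obtain ⟨⟨K, hK⟩, C, hC⟩ := hf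
  refine ⟨K, max C 0, K.2, le_max_right _ _, fun x y => ?_, fun x => (hC x).trans (le_max_left _ _)⟩
  rw [← dist_eq_norm]
  exact hK.dist_le_mul x y

lemma IsLip.continuous {X E : Type*} [PseudoMetricSpace X] [NormedAddCommGroup E] {f : X → E}
    (hf : IsLip f) : Continuous f := by
  obtain ⟨⟨K, hK⟩, -⟩ := hf
  exact hK.continuous

lemma isLip_const {X E : Type*} [PseudoMetricSpace X] [NormedAddCommGroup E] (e : E) :
    IsLip (fun _ : X => e) :=
  IsLip.of_norm_le 0 ‖e‖ (by simp) (by simp)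

lemma IsLip.add {X E : Type*} [PseudoMetricSpace X] [NormedAddCommGroup E] {f g : X → E}
    (hf : IsLip f) (hg : IsLip g) : IsLip (f + g) := by
  obtain ⟨K, C, -, -, hK, hC⟩ := hf.bounds
  obtain ⟨K', C', -, -, hK', hC'⟩ := hg.bounds
  refine IsLip.of_norm_le (K + K') (C + C') (fun x y => ?_)
    fun x => (norm_add_le _ _).trans (add_le_add (hC x) (hC' x))
  have : (f + g) x - (f + g) y = (f x - f y) + (g x - g y) := by
    simp only [Pi.add_apply]; abel
  rw [this, add_mul]
  exact (norm_add_le _ _).trans (add_le_add (hK x y) (hK' x y))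

lemma IsLip.smul {𝕂 X E : Type*} [RCLike 𝕂] [PseudoMetricSpace X] [NormedAddCommGroup E]
    [NormedSpace 𝕂 E] {f : X → E} (c : 𝕂) (hf : IsLip f) : IsLip (c • f) := by
  obtain ⟨K, C, -, -, hK, hC⟩ := hf.bounds
  refine IsLip.of_norm_le (‖c‖ * K) (‖c‖ * C) (fun x y => ?_) fun x => ?_
  · rw [Pi.smul_apply, Pi.smul_apply, ← smul_sub, norm_smul, mul_assoc]
    exact mul_le_mul_of_nonneg_left (hK x y) (norm_nonneg c)
  · rw [Pi.smul_apply, norm_smul]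
    exact mul_le_mul_of_nonneg_left (hC x) (norm_nonneg c)

lemma IsLip.sub {X E : Type*} [PseudoMetricSpace X] [NormedAddCommGroup E] {f g : X → E}
    (hf : IsLip f) (hg : IsLip g) : IsLip (f - g) := by
  obtain ⟨K, C, -, -, hK, hC⟩ := hg.bounds
  rw [sub_eq_add_neg]
  refine hf.add (IsLip.of_norm_le K C (fun x y => ?_) fun x => by simpa using hC x)
  rw [Pi.neg_apply, Pi.neg_apply, ← neg_sub', norm_neg]
  exact hK x y

/-- The truncation of a real number to the interval `[0, 1]`. -/
noncomputable def ramp (t : ℝ) : ℝ := max 0 (min 1 t)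

lemma ramp_nonneg (t : ℝ) : 0 ≤ ramp t := le_max_left _ _

lemma ramp_le_one (t : ℝ) : ramp t ≤ 1 := max_le zero_le_one (min_le_left _ _)

lemma ramp_of_nonpos {t : ℝ} (h : t ≤ 0) : ramp t = 0 :=
  max_eq_left ((min_le_right _ _).trans h)

lemma ramp_of_one_le {t : ℝ} (h : 1 ≤ t) : ramp t = 1 := by
  simp [ramp, min_eq_left h]

lemma ramp_pos {t : ℝ} (h : 0 < t) : 0 < ramp t :=
  lt_max_of_lt_right (lt_min one_pos h)

lemma abs_ramp_sub_le (s t : ℝ) : |ramp s - ramp t| ≤ |s - t| := by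
  unfold ramp
  refine (abs_max_sub_max_le_max 0 (min 1 s) 0 (min 1 t)).trans ?_
  rw [sub_self, abs_zero, max_eq_right (abs_nonneg _)]
  refine (abs_min_sub_min_le_max 1 s 1 t).trans ?_
  rw [sub_self, abs_zero, max_eq_right (abs_nonneg _)]

lemma IsLip.ramp_smul {X E : Type*} [PseudoMetricSpace X] [NormedAddCommGroup E]
    [NormedSpace ℝ E] {f : X → E} (hf : IsLip f) {θ : X → ℝ} {M : ℝ}
    (hθ : ∀ x y, |θ x - θ y| ≤ M * dist x y) : IsLip (fun x => ramp (θ x) • f x) := by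
  obtain ⟨K, C, hK0, hC0, hK, hC⟩ := hf.bounds
  refine IsLip.of_norm_le (M * C + K) C (fun x y => ?_) fun x => ?_
  · have h : ramp (θ x) • f x - ramp (θ y) • f y
        = (ramp (θ x) - ramp (θ y)) • f x + ramp (θ y) • (f x - f y) := by
      rw [sub_smul, smul_sub]; abel
    rw [h, add_mul]
    refine (norm_add_le _ _).trans (add_le_add ?_ ?_)
    · rw [norm_smul, Real.norm_eq_abs, mul_right_comm]
      exact mul_le_mul ((abs_ramp_sub_le _ _).trans (hθ x y)) (hC x) (norm_nonneg _)
        ((abs_nonneg _).trans (hθ x y))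
    · rw [norm_smul, Real.norm_eq_abs, abs_of_nonneg (ramp_nonneg _)]
      exact (mul_le_of_le_one_left (norm_nonneg _) (ramp_le_one _)).trans (hK x y)
  · rw [norm_smul, Real.norm_eq_abs, abs_of_nonneg (ramp_nonneg _)]
    exact (mul_le_of_le_one_left (norm_nonneg _) (ramp_le_one _)).trans (hC x)

lemma exists_bump {X E : Type*} [PseudoMetricSpace X] [NormedAddCommGroup E]
    [NormedSpace ℝ E] [Nontrivial E] (x : X) (r : ℝ) :
    ∃ b : X → E, IsLip b ∧ ∀ z, b z ≠ 0 ↔ dist z x < r := by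
  obtain ⟨e, he⟩ := exists_ne (0 : E)
  refine ⟨fun z => ramp (r - dist z x) • e, (isLip_const e).ramp_smul (M := 1) ?_, fun z => ?_⟩
  · intro z w
    rw [sub_sub_sub_cancel_left, one_mul, abs_sub_comm]
    exact abs_dist_sub_le z w x
  · rw [smul_ne_zero_iff]
    constructor
    · rintro ⟨h, -⟩
      by_contra! hc
      exact h (ramp_of_nonpos (by linarith))
    · intro h
      exact ⟨(ramp_pos (by linarith)).ne', he⟩

/-! ### Sequences in complete metric spaces -/

lemma exists_subseq_tendsto_or_separated {X : Type*} [MetricSpace X] [CompleteSpace X]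
    (p : ℕ → X) :
    (∃ σ : ℕ → ℕ, StrictMono σ ∧ ∃ x, Tendsto (p ∘ σ) atTop (𝓝 x)) ∨
    ∃ σ : ℕ → ℕ, StrictMono σ ∧ ∃ ε > 0, ∀ i j, i ≠ j → ε ≤ dist (p (σ i)) (p (σ j)) := by
  by_cases h : TotallyBounded (range p)
  · left
    have hc : IsCompact (closure (range p)) :=
      isCompact_iff_totallyBounded_isComplete.2 ⟨TotallyBounded.closure h, isClosed_closure.isComplete⟩
    obtain ⟨x, -, σ, hσ, hx⟩ := hc.tendsto_subseq (fun n => subset_closure (mem_range_self n))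
    exact ⟨σ, hσ, x, hx⟩
  · right
    rw [Metric.totallyBounded_iff] at h
    push Not at h
    obtain ⟨ε, hε, h⟩ := h
    obtain ⟨σ, -, hσ⟩ := exists_seq_of_forall_finset_exists (fun _ : ℕ => True)
      (fun m n => m < n ∧ ε ≤ dist (p m) (p n)) (by
        intro s _
        obtain ⟨_, ⟨n, rfl⟩, hn⟩ := not_subset.1 (h (p '' (Finset.range (s.sup id + 1)))
          ((Finset.finite_toSet _).image _))
        simp only [mem_iUnion, not_exists, mem_ball, not_lt] at hn
        refine ⟨n, trivial, fun m hm => ?_⟩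
        have hms : m ≤ s.sup id := Finset.le_sup (f := id) hm
        constructor
        · by_contra! hle
          have := hn (p n) ⟨n, by simp; omega, rfl⟩
          rw [dist_self] at this
          linarith
        · rw [dist_comm]
          exact hn (p m) ⟨m, by simp; omega, rfl⟩)
    refine ⟨σ, fun m n hmn => (hσ m n hmn).1, ε, hε, fun i j hij => ?_⟩
    rcases lt_or_gt_of_ne hij with hlt | hlt
    · exact (hσ i j hlt).2
    · rw [dist_comm]
      exact (hσ j i hlt).2

/-! ### Splitting a function that vanishes at a point -/

lemma mul_abs_log_sub_log_le {s t : ℝ} (hs : 0 ≤ s) (hst : s ≤ t) :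
    s * |Real.log s - Real.log t| ≤ t - s := by
  rcases hs.eq_or_lt with rfl | hs
  · simpa using hst
  have ht : 0 < t := hs.trans_le hst
  rw [abs_sub_comm, ← Real.log_div ht.ne' hs.ne', abs_of_nonneg (Real.log_nonneg (by
    rwa [le_div_iff₀ hs, one_mul]))]
  calc s * Real.log (t / s) ≤ s * (t / s - 1) :=
        mul_le_mul_of_nonneg_left (Real.log_le_sub_one_of_pos (div_pos ht hs)) hs.le
    _ = t - s := by field_simp

/-- Multiplying `f` by a cut-off that is Lipschitz in `log (dist · x)` keeps it Lipschitz, although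
the cut-off itself may oscillate at `x`: since `f x = 0`, the norm of `f` is at most a multiple of
`dist · x`, which compensates the slope of the logarithm. -/
lemma IsLip.log_cutoff_smul {X E : Type*} [MetricSpace X] [NormedAddCommGroup E]
    [NormedSpace ℝ E] {f : X → E} (hf : IsLip f) {x : X} (hx : f x = 0) {G : ℝ → ℝ}
    (hG : ∀ s t, |G s - G t| ≤ |s - t|) :
    IsLip (fun z => ramp (G (Real.log (dist z x))) • f z) := by
  obtain ⟨K, C, hK0, hC0, hK, hC⟩ := hf.bounds
  set θ : X → ℝ := fun z => ramp (G (Real.log (dist z x))) with hθ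
  have key : ∀ z w, dist z x ≤ dist w x → ‖θ z • f z - θ w • f w‖ ≤ 2 * K * dist z w := by
    intro z w hzw
    have h : θ z • f z - θ w • f w = (θ z - θ w) • f z + θ w • (f z - f w) := by
      rw [sub_smul, smul_sub]; abel
    have h1 : ‖(θ z - θ w) • f z‖ ≤ K * dist z w := by
      have hfz : ‖f z‖ ≤ K * dist z x := by simpa [hx] using hK z x
      have hlog := mul_abs_log_sub_log_le dist_nonneg hzw
      have htri : dist w x - dist z x ≤ dist z w := by
        have := dist_triangle_left w x z
        linarith
      rw [norm_smul, Real.norm_eq_abs]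
      calc |θ z - θ w| * ‖f z‖
          ≤ |Real.log (dist z x) - Real.log (dist w x)| * (K * dist z x) :=
            mul_le_mul ((abs_ramp_sub_le _ _).trans (hG _ _)) hfz (norm_nonneg _) (abs_nonneg _)
        _ = K * (dist z x * |Real.log (dist z x) - Real.log (dist w x)|) := by ring
        _ ≤ K * dist z w := mul_le_mul_of_nonneg_left (hlog.trans htri) hK0
    have h2 : ‖θ w • (f z - f w)‖ ≤ K * dist z w := by
      rw [norm_smul, Real.norm_eq_abs, abs_of_nonneg (ramp_nonneg _)]
      exact (mul_le_of_le_one_left (norm_nonneg _) (ramp_le_one _)).trans (hK z w)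
    rw [h]
    linarith [norm_add_le ((θ z - θ w) • f z) (θ w • (f z - f w))]
  refine IsLip.of_norm_le (2 * K) C (fun z w => ?_) fun z => ?_
  · rcases le_total (dist z x) (dist w x) with h | h
    · exact key z w h
    · rw [norm_sub_rev, dist_comm z w]
      exact key w z h
  · rw [norm_smul, Real.norm_eq_abs, abs_of_nonneg (ramp_nonneg _)]
    exact (mul_le_of_le_one_left (norm_nonneg _) (ramp_le_one _)).trans (hC z)

/-- `x` lies in the closure of the interior of the zero set of `f`. -/
def VanishesNear {X E : Type*} [PseudoMetricSpace X] [Zero E] (f : X → E) (x : X) : Prop :=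
  ∀ ρ > 0, ∃ z, dist z x < ρ ∧ ∀ᶠ z' in 𝓝 z, f z' = 0

/-- A Lipschitz function vanishing at `x` is a sum of two Lipschitz functions whose zero sets have
interiors accumulating at `x`. -/
lemma exists_split {X E : Type*} [MetricSpace X] [NormedAddCommGroup E]
    [NormedSpace ℝ E] {f : X → E} (hf : IsLip f) {x : X} (hx : f x = 0) :
    ∃ f₁ f₂ : X → E, IsLip f₁ ∧ IsLip f₂ ∧ f = f₁ + f₂ ∧
      VanishesNear f₁ x ∧ VanishesNear f₂ x := by
  rcases (𝓝[≠] x).eq_or_neBot with hbot | hne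
  · refine ⟨f, 0, hf, isLip_const 0, (add_zero f).symm, fun ρ hρ => ⟨x, by simpa, ?_⟩,
      fun ρ hρ => ⟨x, by simpa, by simp⟩⟩
    have : 𝓝 x = pure x := by
      rw [← isOpen_singleton_iff_nhds_eq_pure, isOpen_singleton_iff_punctured_nhds, hbot]
    rw [this]
    exact hx
  -- points `z n → x` whose distances to `x` have logarithms at least `2` apart
  obtain ⟨z, hzx, hz⟩ := exists_seq_of_forall_finset_exists (fun w : X => w ≠ x)
    (fun v w => dist w x < dist v x * Real.exp (-2)) (by
      intro s hs
      have h1 : ∀ᶠ w in 𝓝[≠] x, ∀ v ∈ s, dist w x < dist v x * Real.exp (-2) := by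
        rw [Finset.eventually_all]
        intro v hv
        exact eventually_nhdsWithin_of_eventually_nhds
          (Metric.eventually_nhds_iff.2 ⟨_, mul_pos (dist_pos.2 (hs v hv)) (Real.exp_pos _),
            fun _ h => h⟩)
      obtain ⟨w, hw, hwx⟩ := (h1.and eventually_mem_nhdsWithin).exists
      exact ⟨w, hwx, hw⟩)
  have hpos : ∀ n, 0 < dist (z n) x := fun n => dist_pos.2 (hzx n)
  have hgap : ∀ m n, m < n → Real.log (dist (z n) x) ≤ Real.log (dist (z m) x) - 2 := by
    intro m n hmn
    have := Real.log_le_log (hpos n) (hz m n hmn).le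
    rwa [Real.log_mul (hpos m).ne' (Real.exp_pos _).ne', Real.log_exp, ← sub_eq_add_neg] at this
  have hlim : ∀ ρ > 0, ∃ N, ∀ n ≥ N, dist (z n) x < ρ := by
    intro ρ hρ
    have h1 : ∀ n, dist (z n) x ≤ dist (z 0) x * Real.exp (-2) ^ n := by
      intro n
      induction n with
      | zero => simp
      | succ k ih =>
        rw [pow_succ, ← mul_assoc]
        exact (hz k (k + 1) k.lt_succ_self).le.trans
          (mul_le_mul_of_nonneg_right ih (Real.exp_pos _).le)
    have h2 : Tendsto (fun n : ℕ => dist (z 0) x * Real.exp (-2) ^ n) atTop (𝓝 0) := by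
      simpa using (tendsto_pow_atTop_nhds_zero_of_lt_one (Real.exp_pos (-2)).le
        (Real.exp_lt_one_iff.2 (by norm_num))).const_mul (dist (z 0) x)
    obtain ⟨N, hN⟩ := eventually_atTop.1 (h2.eventually (gt_mem_nhds hρ))
    exact ⟨N, fun n hn => (h1 n).trans_lt (hN n hn)⟩
  -- the cut-off vanishes near the even points and equals `1` near the odd ones
  set L : Set ℝ := range fun n : ℕ => Real.log (dist (z (2 * n)) x) with hL
  set G : ℝ → ℝ := fun s => infDist s L - 1 / 2 with hGdef
  have hG : ∀ s t, |G s - G t| ≤ |s - t| := by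
    intro s t
    simp only [hGdef, sub_sub_sub_cancel_right]
    have := (lipschitz_infDist_pt L).dist_le_mul s t
    simpa [Real.dist_eq] using this
  have hcont : ∀ n, ContinuousAt (fun w => G (Real.log (dist w x))) (z n) := by
    intro n
    have h1 : ContinuousAt (fun w => Real.log (dist w x)) (z n) :=
      ContinuousAt.log (by fun_prop) (hpos n).ne'
    have h2 : Continuous G := by
      have := continuous_infDist_pt L
      fun_prop
    exact h2.continuousAt.comp h1
  have hf₁ := hf.log_cutoff_smul hx hG
  refine ⟨_, _, hf₁, hf.sub hf₁, (add_sub_cancel _ _).symm, fun ρ hρ => ?_, fun ρ hρ => ?_⟩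
  · obtain ⟨N, hN⟩ := hlim ρ hρ
    refine ⟨z (2 * N), hN _ (by omega), ?_⟩
    have hval : G (Real.log (dist (z (2 * N)) x)) < 0 := by
      simp only [hGdef]
      rw [infDist_zero_of_mem (hL ▸ mem_range_self N)]
      norm_num
    filter_upwards [(hcont (2 * N)).eventually (gt_mem_nhds hval)] with w hw
    rw [ramp_of_nonpos hw.le, zero_smul]
  · obtain ⟨N, hN⟩ := hlim ρ hρ
    refine ⟨z (2 * N + 1), hN _ (by omega), ?_⟩
    have hval : 1 < G (Real.log (dist (z (2 * N + 1)) x)) := by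
      have : 2 ≤ infDist (Real.log (dist (z (2 * N + 1)) x)) L := by
        rw [le_infDist (range_nonempty _)]
        rintro _ ⟨m, rfl⟩
        rw [Real.dist_eq]
        rcases lt_or_gt_of_ne (show 2 * m ≠ 2 * N + 1 by omega) with h | h
        · rw [abs_sub_comm]
          exact le_trans (by linarith [hgap _ _ h]) (le_abs_self _)
        · exact le_trans (by linarith [hgap _ _ h]) (le_abs_self _)
      simp only [hGdef]
      linarith
    filter_upwards [(hcont (2 * N + 1)).eventually (lt_mem_nhds hval)] with w hw
    rw [Pi.sub_apply, ramp_of_one_le hw.le, one_smul, sub_self]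

/-! ### The support point of a point -/

lemma coz_inter_eq_empty {X E : Type*} [Zero E] {f g : X → E} :
    coz f ∩ coz g = ∅ ↔ ∀ x, f x = 0 ∨ g x = 0 := by
  simp only [coz, eq_empty_iff_forall_notMem, mem_inter_iff, mem_ofPred_eq, not_and_or, not_not]

section Bisep

variable {𝕂 X Y E F : Type*} [RCLike 𝕂] [MetricSpace X] [MetricSpace Y]
  [NormedAddCommGroup E] [NormedSpace 𝕂 E] [NormedAddCommGroup F] [NormedSpace 𝕂 F]
  {T : (X → E) → (Y → F)}

lemma IsBisep.perp (hT : IsBisep 𝕂 T) {f g : X → E} (hf : IsLip f) (hg : IsLip g) :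
    (∀ y, T f y = 0 ∨ T g y = 0) ↔ ∀ x, f x = 0 ∨ g x = 0 := by
  rw [← coz_inter_eq_empty, ← coz_inter_eq_empty]
  exact ⟨hT.sep_inv f g hf hg, hT.sep f g hf hg⟩

lemma IsBisep.map_zero (hT : IsBisep 𝕂 T) : T 0 = 0 := by
  have := hT.map_smul 0 0 (isLip_const 0)
  simpa using this

lemma IsBisep.exists_ne (hT : IsBisep 𝕂 T) {f : X → E} (hf : IsLip f) (h : ∃ x, f x ≠ 0) :
    ∃ y, T f y ≠ 0 := by
  by_contra! hc
  obtain ⟨x, hx⟩ := h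
  refine hx (congrFun (hT.inj f 0 hf (isLip_const 0) ?_) x)
  rw [hT.map_zero]
  exact funext hc

/-- The images of functions concentrated near `x` cannot meet both `{φ < a}` and `{φ > b}`: cutting
`T ê` along `φ` writes `ê` as a sum of two functions, one of which is nonzero around `x`. -/
lemma IsBisep.dichotomy [Nontrivial E] [Nontrivial F] (hT : IsBisep 𝕂 T) (x : X) {φ : Y → ℝ}
    (hφ : ∀ y y', |φ y - φ y'| ≤ dist y y') {a b : ℝ} (hab : a < b) :
    ∃ r > 0, (∀ f, IsLip f → (∀ z, f z ≠ 0 → dist z x < r) → ∀ y, φ y < a → T f y = 0) ∨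
      (∀ f, IsLip f → (∀ z, f z ≠ 0 → dist z x < r) → ∀ y, b < φ y → T f y = 0) := by
  let _ : NormedSpace ℝ F := NormedSpace.restrictScalars ℝ 𝕂 F
  obtain ⟨e, he⟩ := _root_.exists_ne (0 : E)
  obtain ⟨v, hv⟩ := _root_.exists_ne (0 : F)
  have hba : 0 < b - a := sub_pos.2 hab
  set g : Y → F := T fun _ => e with hgdef
  have hg : IsLip g := hT.maps_lip _ (isLip_const e)
  have hψ : ∀ y y', |(φ y - a) / (b - a) - (φ y' - a) / (b - a)| ≤ (b - a)⁻¹ * dist y y' := by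
    intro y y'
    rw [← sub_div, sub_sub_sub_cancel_right, abs_div, abs_of_pos hba, div_eq_inv_mul]
    exact mul_le_mul_of_nonneg_left (hφ y y') (inv_nonneg.2 hba.le)
  set g₁ : Y → F := fun y => ramp ((φ y - a) / (b - a)) • g y with hg₁def
  have hg₁ : IsLip g₁ := hg.ramp_smul hψ
  obtain ⟨f₁, hf₁, hTf₁⟩ := hT.surj g₁ hg₁
  obtain ⟨f₂, hf₂, hTf₂⟩ := hT.surj (g - g₁) (hg.sub hg₁)
  have hsum : f₁ + f₂ = fun _ => e := by
    refine hT.inj _ _ (hf₁.add hf₂) (isLip_const e) ?_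
    rw [hT.map_add _ _ hf₁ hf₂, hTf₁, hTf₂, add_sub_cancel]
  -- a function nonzero around `x` whose image misses `coz k` confines all images near `x`
  have conf : ∀ f₀, IsLip f₀ → f₀ x ≠ 0 → ∃ r > 0, ∀ k : Y → F, IsLip k →
      (∀ y, k y = 0 ∨ T f₀ y = 0) → ∀ f, IsLip f → (∀ z, f z ≠ 0 → dist z x < r) →
      ∀ y, k y ≠ 0 → T f y = 0 := by
    intro f₀ hf₀ hx
    obtain ⟨r, hr, hball⟩ := Metric.eventually_nhds_iff.1
      (hf₀.continuous.continuousAt.eventually_ne hx)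
    refine ⟨r, hr, fun k hk hkf f hf hfr y hky => ?_⟩
    obtain ⟨k', hk', rfl⟩ := hT.surj k hk
    rw [hT.perp hk' hf₀] at hkf
    have : ∀ z, k' z = 0 ∨ f z = 0 := by
      intro z
      by_cases hz : f z = 0
      · exact Or.inr hz
      · exact Or.inl ((hkf z).resolve_right (hball (hfr z hz)))
    exact (((hT.perp hk' hf).2 this) y).resolve_left hky
  have hx : f₁ x ≠ 0 ∨ f₂ x ≠ 0 := by
    by_contra! hc
    have := congrFun hsum x
    rw [Pi.add_apply, hc.1, hc.2, add_zero] at this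
    exact he this.symm
  rcases hx with hx | hx
  · obtain ⟨r, hr, h⟩ := conf f₁ hf₁ hx
    refine ⟨r, hr, Or.inl fun f hf hfr y hy => ?_⟩
    refine h (fun y => ramp (a - φ y) • v) ((isLip_const v).ramp_smul (M := 1) ?_) ?_ f hf hfr y
      (smul_ne_zero (ramp_pos (sub_pos.2 hy)).ne' hv)
    · intro y y'
      rw [sub_sub_sub_cancel_left, one_mul, abs_sub_comm]
      exact hφ y y'
    · intro y
      rw [hTf₁]
      rcases le_total (φ y) a with hya | hya
      · right
        simp only [hg₁def]
        rw [ramp_of_nonpos (div_nonpos_of_nonpos_of_nonneg (by linarith) hba.le), zero_smul]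
      · left
        rw [ramp_of_nonpos (by linarith), zero_smul]
  · obtain ⟨r, hr, h⟩ := conf f₂ hf₂ hx
    refine ⟨r, hr, Or.inr fun f hf hfr y hy => ?_⟩
    refine h (fun y => ramp (φ y - b) • v) ((isLip_const v).ramp_smul (M := 1) ?_) ?_ f hf hfr y
      (smul_ne_zero (ramp_pos (sub_pos.2 hy)).ne' hv)
    · intro y y'
      rw [sub_sub_sub_cancel_right, one_mul]
      exact hφ y y'
    · intro y
      rw [hTf₂]
      rcases le_total (φ y) b with hyb | hyb
      · left
        rw [ramp_of_nonpos (by linarith), zero_smul]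
      · right
        simp only [hg₁def, Pi.sub_apply]
        rw [ramp_of_one_le (by rw [le_div_iff₀ hba]; linarith), one_smul, sub_self]

/-- Every `x` has a support point `y`: the images of functions concentrated near `x` are
concentrated near `y`. -/
lemma IsBisep.exists_support [Nontrivial E] [Nontrivial F] [CompleteSpace Y] (hT : IsBisep 𝕂 T)
    (x : X) : ∃ y : Y, ∀ ε > 0, ∃ r > 0, ∀ f, IsLip f → (∀ z, f z ≠ 0 → dist z x < r) →
      ∀ w, T f w ≠ 0 → dist w y ≤ ε := by
  let _ : NormedSpace ℝ E := NormedSpace.restrictScalars ℝ 𝕂 E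
  have hb : ∀ n : ℕ, ∃ (b : X → E) (p : Y), IsLip b ∧
      (∀ z, b z ≠ 0 → dist z x < 1 / ((n : ℝ) + 1)) ∧ T b p ≠ 0 := by
    intro n
    obtain ⟨b, hb, hb'⟩ := exists_bump (E := E) x (1 / ((n : ℝ) + 1))
    obtain ⟨p, hp⟩ := hT.exists_ne hb ⟨x, (hb' x).2 (by rw [dist_self]; positivity)⟩
    exact ⟨b, p, hb, fun z => (hb' z).1, hp⟩
  choose b p hbL hbs hbp using hb
  have hsmall : ∀ r > 0, ∃ N : ℕ, ∀ n ≥ N, ∀ z, b n z ≠ 0 → dist z x < r := by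
    intro r hr
    obtain ⟨N, hN⟩ := exists_nat_one_div_lt hr
    exact ⟨N, fun n hn z hz => (hbs n z hz).trans_le
      ((one_div_le_one_div_of_le (by positivity) (by exact_mod_cast Nat.succ_le_succ hn)).trans
        hN.le)⟩
  rcases exists_subseq_tendsto_or_separated p with ⟨σ, hσ, y, hy⟩ | ⟨σ, hσ, ε, hε, hsep⟩
  · refine ⟨y, fun ε hε => ?_⟩
    obtain ⟨r, hr, h | h⟩ := hT.dichotomy x (φ := fun w => dist w y)
      (fun w w' => abs_dist_sub_le w w' y) (half_lt_self hε)
    · exfalso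
      obtain ⟨N, hN⟩ := hsmall r hr
      obtain ⟨M, hM⟩ := Metric.tendsto_atTop.1 hy (ε / 2) (half_pos hε)
      exact hbp _ (h (b (σ (max M N))) (hbL _)
        (hN _ ((le_max_right M N).trans (hσ.id_le _))) _ (hM _ (le_max_left M N)))
    · refine ⟨r, hr, fun f hf hfr w hw => ?_⟩
      by_contra! hc
      exact hw (h f hf hfr w hc)
  · exfalso
    -- the distance to the even terms oscillates along the sequence
    set P : Set Y := range fun k : ℕ => p (σ (2 * k)) with hP
    obtain ⟨r, hr, h⟩ := hT.dichotomy x (φ := fun w => infDist w P) (fun w w' => by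
      simpa [Real.dist_eq] using (lipschitz_infDist_pt P).dist_le_mul w w')
      (show ε / 3 < ε / 2 by linarith)
    obtain ⟨N, hN⟩ := hsmall r hr
    rcases h with h | h
    · refine hbp _ (h (b (σ (2 * N))) (hbL _) (hN _ (le_trans (by omega) (hσ.le_apply))) _ ?_)
      rw [infDist_zero_of_mem (hP ▸ mem_range_self N)]
      positivity
    · refine hbp _ (h (b (σ (2 * N + 1))) (hbL _) (hN _ (le_trans (by omega) (hσ.le_apply))) _ ?_)
      refine (half_lt_self hε).trans_le ((le_infDist (range_nonempty _)).2 ?_)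
      rintro _ ⟨k, rfl⟩
      exact hsep _ _ (by omega)

/-- `T f` at the support point of `x` depends only on `f x`. -/
lemma IsBisep.exists_support_kernel [Nontrivial E] [Nontrivial F] [CompleteSpace Y]
    (hT : IsBisep 𝕂 T) (x : X) : ∃ y : Y, ∀ f, IsLip f → f x = 0 → T f y = 0 := by
  let _ : NormedSpace ℝ E := NormedSpace.restrictScalars ℝ 𝕂 E
  obtain ⟨y, hy⟩ := hT.exists_support x
  have key : ∀ f, IsLip f → VanishesNear f x → T f y = 0 := by
    intro f hf hv
    by_contra hne
    obtain ⟨ε, hε, hball⟩ := Metric.eventually_nhds_iff.1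
      ((hT.maps_lip f hf).continuous.continuousAt.eventually_ne hne)
    obtain ⟨r, hr, hr'⟩ := hy (ε / 2) (half_pos hε)
    obtain ⟨z, hz, hfz⟩ := hv r hr
    obtain ⟨ρ, hρ, hfρ⟩ := Metric.eventually_nhds_iff.1 hfz
    -- a bump at `z` orthogonal to `f`, whose image lives where `T f` has no zero
    obtain ⟨b, hb, hb'⟩ := exists_bump (E := E) z (min ρ (r - dist z x))
    obtain ⟨w, hw⟩ := hT.exists_ne hb ⟨z, (hb' z).2 (by
      rw [dist_self]; exact lt_min hρ (sub_pos.2 hz))⟩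
    have hperp : ∀ u, b u = 0 ∨ f u = 0 := by
      intro u
      by_cases hu : b u = 0
      · exact Or.inl hu
      · exact Or.inr (hfρ (((hb' u).1 hu).trans_le (min_le_left _ _)))
    have hwy : dist w y ≤ ε / 2 := hr' b hb (fun u hu => by
      have h1 := ((hb' u).1 hu).trans_le (min_le_right _ _)
      have h2 := dist_triangle u z x
      linarith) w hw
    exact (((hT.perp hb hf).2 hperp) w).elim hw (hball (by linarith))
  refine ⟨y, fun f hf hx => ?_⟩
  obtain ⟨f₁, f₂, hf₁, hf₂, rfl, h₁, h₂⟩ := exists_split hf hx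
  rw [hT.map_add _ _ hf₁ hf₂, Pi.add_apply, key f₁ hf₁ h₁, key f₂ hf₂ h₂, add_zero]

lemma IsBisep.exists_inverse (hT : IsBisep 𝕂 T) :
    ∃ S : (Y → F) → (X → E), IsBisep 𝕂 S ∧ ∀ f, IsLip f → S (T f) = f := by
  classical
  choose! S hSL hTS using hT.surj
  have hST : ∀ f, IsLip f → S (T f) = f := fun f hf =>
    hT.inj _ _ (hSL _ (hT.maps_lip f hf)) hf (hTS _ (hT.maps_lip f hf))
  refine ⟨S, ⟨hSL, fun f g hf hg => ?_, fun c f hf => ?_, fun f g hf hg h => ?_,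
    fun f hf => ⟨T f, hT.maps_lip f hf, hST f hf⟩, fun f g hf hg h => ?_,
    fun f g hf hg h => ?_⟩, hST⟩
  · refine hT.inj _ _ (hSL _ (hf.add hg)) ((hSL f hf).add (hSL g hg)) ?_
    rw [hT.map_add _ _ (hSL f hf) (hSL g hg), hTS _ (hf.add hg), hTS f hf, hTS g hg]
  · refine hT.inj _ _ (hSL _ (hf.smul c)) ((hSL f hf).smul c) ?_
    rw [hT.map_smul c _ (hSL f hf), hTS _ (hf.smul c), hTS f hf]
  · rw [← hTS f hf, h, hTS g hg]
  · refine hT.sep_inv _ _ (hSL f hf) (hSL g hg) ?_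
    rwa [hTS f hf, hTS g hg]
  · have := hT.sep _ _ (hSL f hf) (hSL g hg) h
    rwa [hTS f hf, hTS g hg] at this

end Bisep

/-! ### Interpolation on a separated sequence -/

/-- Any values in the unit ball prescribed on a uniformly separated sequence are attained by a
bounded Lipschitz function. -/
lemma exists_isLip_interpolating {Y F : Type*} [MetricSpace Y] [NormedAddCommGroup F]
    [NormedSpace ℝ F] {q : ℕ → Y} {ε : ℝ} (hε : 0 < ε)
    (hq : ∀ i j, i ≠ j → ε ≤ dist (q i) (q j)) {v : ℕ → F} (hv : ∀ k, ‖v k‖ ≤ 1) :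
    ∃ g : Y → F, IsLip g ∧ ∀ k, g (q k) = v k := by
  -- `κ y` is the index of the only `q k` close to `y`, if there is one
  have hκ : ∀ y, ∃ k, (∃ j, dist y (q j) < ε / 4) → dist y (q k) < ε / 4 := by
    intro y
    by_cases h : ∃ j, dist y (q j) < ε / 4
    · exact ⟨h.choose, fun _ => h.choose_spec⟩
    · exact ⟨0, fun h' => absurd h' h⟩
  choose κ hκ using hκ
  set τ : Y → ℝ := fun y => ramp (1 - 4 / ε * infDist y (range q)) with hτdef
  have hτ0 : ∀ y, 0 ≤ τ y := fun y => ramp_nonneg _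
  have hτ1 : ∀ y, τ y ≤ 1 := fun y => ramp_le_one _
  have hτL : ∀ y y', |τ y - τ y'| ≤ 4 / ε * dist y y' := by
    intro y y'
    refine (abs_ramp_sub_le _ _).trans ?_
    rw [sub_sub_sub_cancel_left, ← mul_sub, abs_mul, abs_of_pos (by positivity), abs_sub_comm]
    refine mul_le_mul_of_nonneg_left ?_ (by positivity)
    simpa [Real.dist_eq] using (lipschitz_infDist_pt (range q)).dist_le_mul y y'
  have hτκ : ∀ y, τ y ≠ 0 → dist y (q (κ y)) < ε / 4 := by
    intro y hy
    apply hκ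
    have h1 : infDist y (range q) < ε / 4 := by
      by_contra! hc
      refine hy (ramp_of_nonpos ?_)
      have := mul_le_mul_of_nonneg_left hc (show 0 ≤ 4 / ε by positivity)
      rw [div_mul_div_cancel₀ hε.ne', div_self (by norm_num)] at this
      linarith
    obtain ⟨_, ⟨j, rfl⟩, hj⟩ := (infDist_lt_iff (range_nonempty q)).1 h1
    exact ⟨j, hj⟩
  refine ⟨fun y => τ y • v (κ y), IsLip.of_norm_le (4 / ε) 1 (fun y y' => ?_) fun y => ?_,
    fun k => ?_⟩
  · by_cases hvv : v (κ y) = v (κ y')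
    · rw [hvv, ← sub_smul, norm_smul, Real.norm_eq_abs]
      exact (mul_le_of_le_one_right (abs_nonneg _) (hv _)).trans (hτL y y')
    by_cases h0 : τ y = 0
    · have := hτL y y'
      rw [h0, zero_smul, zero_sub, norm_neg, norm_smul, Real.norm_eq_abs]
      rw [h0, zero_sub, abs_neg] at this
      exact (mul_le_of_le_one_right (abs_nonneg _) (hv _)).trans this
    by_cases h0' : τ y' = 0
    · have := hτL y y'
      rw [h0', zero_smul, sub_zero, norm_smul, Real.norm_eq_abs]
      rw [h0', sub_zero] at this
      exact (mul_le_of_le_one_right (abs_nonneg _) (hv _)).trans this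
    have hne : κ y ≠ κ y' := fun h => hvv (congrArg v h)
    have hd : ε / 2 ≤ dist y y' := by
      have h1 := hq _ _ hne
      have h2 := hτκ y h0
      have h3 := hτκ y' h0'
      have h4 := dist_triangle4 (q (κ y)) y y' (q (κ y'))
      rw [dist_comm (q (κ y)) y] at h4
      linarith
    have hn : ∀ u, ‖τ u • v (κ u)‖ ≤ 1 := fun u => by
      rw [norm_smul, Real.norm_eq_abs, abs_of_nonneg (hτ0 u)]
      exact mul_le_one₀ (hτ1 u) (norm_nonneg _) (hv _)
    calc ‖τ y • v (κ y) - τ y' • v (κ y')‖ ≤ 1 + 1 :=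
          (norm_sub_le _ _).trans (add_le_add (hn y) (hn y'))
      _ = 4 / ε * (ε / 2) := by field_simp; norm_num
      _ ≤ 4 / ε * dist y y' := mul_le_mul_of_nonneg_left hd (by positivity)
  · rw [norm_smul, Real.norm_eq_abs, abs_of_nonneg (hτ0 y)]
    exact mul_le_one₀ (hτ1 y) (norm_nonneg _) (hv _)
  · have hτk : τ (q k) = 1 := by
      simp only [hτdef]
      rw [infDist_zero_of_mem (mem_range_self k), mul_zero, sub_zero, ramp_of_one_le le_rfl]
    have hk : κ (q k) = k := by
      by_contra hne
      have h1 := hq _ _ hne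
      have h2 := hτκ (q k) (by rw [hτk]; exact one_ne_zero)
      rw [dist_comm] at h2
      linarith
    simp only [hτk, hk, one_smul]

/-- If `T : Lip(X,E) → Lip(Y,F)` is biseparating, then for every nonzero
`e ∈ E` one has `inf {‖(T ê) y‖ : y ∈ Y} > 0`. -/
theorem biseparating_inf_norm_pos
    {𝕂 X Y E F : Type*} [RCLike 𝕂]
    [MetricSpace X] [CompleteSpace X] [MetricSpace Y] [CompleteSpace Y]
    [NormedAddCommGroup E] [NormedSpace 𝕂 E] [Nontrivial E]
    [NormedAddCommGroup F] [NormedSpace 𝕂 F] [Nontrivial F]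
    (hXb : IsBounded (univ : Set X)) (hYb : IsBounded (univ : Set Y))
    (T : (X → E) → (Y → F)) (hT : IsBisep 𝕂 T)
    (e : E) (he : e ≠ 0) :
    ∃ δ : ℝ, 0 < δ ∧ ∀ y : Y, δ ≤ ‖T (fun _ => e) y‖ := by
  let _ : NormedSpace ℝ F := NormedSpace.restrictScalars ℝ 𝕂 F
  obtain ⟨S, hS, hST⟩ := hT.exists_inverse
  choose h hh using fun y => hS.exists_support_kernel y
  set w : Y → F := T fun _ => e with hw
  have hwL : IsLip w := hT.maps_lip _ (isLip_const e)
  have hSw : S w = fun _ => e := hST _ (isLip_const e)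
  have hw0 : ∀ y, w y ≠ 0 := by
    intro y hy
    have := hh y w hwL hy
    rw [hSw] at this
    exact he this
  have hval : ∀ g, IsLip g → ∀ (c : 𝕂) (y : Y), g y = c • w y → S g (h y) = c • e := by
    intro g hg c y hgy
    have hcw : IsLip (c • w) := hwL.smul c
    have h1 := hh y (g - c • w) (hg.sub hcw) (by rw [Pi.sub_apply, Pi.smul_apply, hgy, sub_self])
    have h2 : S g = S (g - c • w) + c • S w := by
      rw [← hS.map_smul c w hwL, ← hS.map_add _ _ (hg.sub hcw) hcw, sub_add_cancel]
    rw [h2, Pi.add_apply, h1, zero_add, Pi.smul_apply, hSw]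
  by_contra! hc
  choose p hp using fun n : ℕ => hc (1 / ((n : ℝ) + 1)) (by positivity)
  rcases exists_subseq_tendsto_or_separated p with ⟨σ, hσ, y, hy⟩ | ⟨σ, hσ, ε, hε, hsep⟩
  · refine hw0 y (tendsto_nhds_unique ((hwL.continuous.tendsto y).comp hy) ?_)
    refine squeeze_zero_norm (fun n => (hp (σ n)).le) ?_
    exact (tendsto_one_div_add_atTop_nhds_zero_nat (𝕜 := ℝ)).comp hσ.tendsto_atTop
  · -- `S g` takes the values `e / ‖w (p (σ k))‖`, which are unbounded
    obtain ⟨g, hg, hgk⟩ := exists_isLip_interpolating hε hsep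
      (v := fun k => ((‖w (p (σ k))‖⁻¹ : ℝ) : 𝕂) • w (p (σ k))) (fun k => by
        rw [norm_smul, RCLike.norm_ofReal, abs_of_nonneg (inv_nonneg.2 (norm_nonneg _)),
          inv_mul_cancel₀ (norm_ne_zero_iff.2 (hw0 _))])
    obtain ⟨-, C, -, -, -, hC⟩ := (hS.maps_lip g hg).bounds
    have he' : 0 < ‖e‖ := norm_pos_iff.2 he
    obtain ⟨k, hk⟩ := exists_nat_gt (C / ‖e‖)
    have h1 := hC (h (p (σ k)))
    have hpos : 0 < ‖w (p (σ k))‖ := norm_pos_iff.2 (hw0 _)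
    rw [hval g hg _ _ (hgk k), norm_smul, RCLike.norm_ofReal,
      abs_of_nonneg (inv_nonneg.2 hpos.le), ← le_div_iff₀ he'] at h1
    have h2 : (k : ℝ) + 1 ≤ ‖w (p (σ k))‖⁻¹ := by
      have h3 := (hp (σ k)).le
      rw [le_inv_comm₀ (by positivity) hpos]
      refine h3.trans ?_
      rw [one_div]
      refine inv_anti₀ (by positivity) ?_
      have : k ≤ σ k := hσ.id_le k
      exact_mod_cast Nat.succ_le_succ this
    linarith
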